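/- Let G satisfy Assumption F (with G in place of F) together with the strict monotonicity condition: at every point, G_r + G_p·w + wᵀ G_γ w ≥ 0 for all w ∈ ℝ^d. Set β := sup|G_r|. Then for every a₀, b₀ ≥ 0, the function δ(t) := e^{β(T−t)}(a₀ + b₀(T−t)) satisfies: for all bounded measurable functions φ ≤ ψ on [0,T]×ℝ^d, all h > 0 and all (t,x) with t + h ≤ T, T^G_h[φ + δ](t,x) ≤ T^G_h[ψ](t,x) + δ(t) − h·b₀, where (φ + δ)(s,y) := φ(s,y) + δ(s). -/

import Mathlib

/-!
Write `Q(w) = G_r + G_p · H₁(w) + ∑ᵢⱼ (G_γ)ᵢⱼ H₂(w)ᵢⱼ`. By the mean value theorem in `(r, p, γ)`,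
the difference `T_h[φ + δ] - T_h[ψ]` equals `E[f (1 + h Q)]` with
`f = φ + δ(t + h) - ψ ≤ δ(t + h)`, the derivatives being taken at an intermediate point.

Completing the weights with `v = (σᵀ)⁻¹ W / h` gives
`1 + h Q = (1 - Tr(a⁻¹ G_γ)) + h (G_r + G_p · v + vᵀ G_γ v)`,
which is nonnegative by the trace bound and the strict monotonicity condition
(`one_add_mul_weight_nonneg`). Since `H₁` and `H₂` are centered, `E[1 + h Q] = 1 + h G_r`
(`integral_weight`). Hence the difference is at most
`δ(t + h) (1 + h G_r) ≤ δ(t + h) e^{β h} = δ(t) - h b₀ e^{β (T - t)} ≤ δ(t) - h b₀`.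
-/

open MeasureTheory ProbabilityTheory Matrix Real Set Function

noncomputable section

attribute [local instance] Matrix.normedAddCommGroup Matrix.normedSpace

abbrev Vec (d : ℕ) := Fin d → ℝ
abbrev Mat (d : ℕ) := Matrix (Fin d) (Fin d) ℝ

/-- Law of the Gaussian vector `W_h` in `ℝ^d`, centered with covariance `h · I_d`. -/
def gaussVec (d : ℕ) (h : ℝ) : Measure (Vec d) :=
  Measure.pi fun _ => gaussianReal 0 h.toNNReal

/-- One step Euler scheme `X̂_h^{t,x} = x + μ(t,x) h + σ(t,x) W_h`. -/
def euler {d : ℕ} (μ : ℝ → Vec d → Vec d) (σ : ℝ → Vec d → Mat d)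
    (h t : ℝ) (x w : Vec d) : Vec d :=
  x + h • μ t x + (σ t x).mulVec w

/-- Weight `H_1^h(t,x) = (σ(t,x)ᵀ)⁻¹ W_h / h`. -/
def H1w {d : ℕ} (σ : ℝ → Vec d → Mat d) (h t : ℝ) (x w : Vec d) : Vec d :=
  (1 / h) • ((σ t x)ᵀ⁻¹.mulVec w)

/-- Weight `H_2^h(t,x) = (σ(t,x)ᵀ)⁻¹ (W_h W_hᵀ − h I_d) σ(t,x)⁻¹ / h²`. -/
def H2w {d : ℕ} (σ : ℝ → Vec d → Mat d) (h t : ℝ) (x w : Vec d) : Mat d :=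
  (1 / h ^ 2) • ((σ t x)ᵀ⁻¹ * (vecMulVec w w - h • (1 : Mat d)) * (σ t x)⁻¹)

/-- One-step operator acting on the next-time function `ψ`. -/
def step {d : ℕ} (F : ℝ → Vec d → ℝ → Vec d → Mat d → ℝ)
    (μ : ℝ → Vec d → Vec d) (σ : ℝ → Vec d → Mat d)
    (h t : ℝ) (ψ : Vec d → ℝ) (x : Vec d) : ℝ :=
  (∫ w, ψ (euler μ σ h t x w) ∂gaussVec d h)
    + h * F t x (∫ w, ψ (euler μ σ h t x w) ∂gaussVec d h)
        (fun i => ∫ w, ψ (euler μ σ h t x w) * H1w σ h t x w i ∂gaussVec d h)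
        (Matrix.of fun i j => ∫ w, ψ (euler μ σ h t x w) * H2w σ h t x w i j ∂gaussVec d h)

/-- The operator `T_h[ψ](t,x)`. -/
def Th {d : ℕ} (F : ℝ → Vec d → ℝ → Vec d → Mat d → ℝ)
    (μ : ℝ → Vec d → Vec d) (σ : ℝ → Vec d → Mat d)
    (ψ : ℝ → Vec d → ℝ) (h t : ℝ) (x : Vec d) : ℝ :=
  step F μ σ h t (ψ (t + h)) x

/-- Assumption F of the paper, with explicit partial derivatives `Fr, Fp, Fγ` of `F`
in the variables `(r,p,γ)`. -/
structure AssumptionF (d : ℕ) (σ : ℝ → Vec d → Mat d)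
    (F : ℝ → Vec d → ℝ → Vec d → Mat d → ℝ)
    (Fr : ℝ → Vec d → ℝ → Vec d → Mat d → ℝ)
    (Fp : ℝ → Vec d → ℝ → Vec d → Mat d → Vec d)
    (Fγ : ℝ → Vec d → ℝ → Vec d → Mat d → Mat d) : Prop where
  lipschitz : ∃ L : ℝ, 0 ≤ L ∧ ∀ t x x' r r' p p' γ γ',
    |F t x r p γ - F t x' r' p' γ'| ≤ L * (‖x - x'‖ + |r - r'| + ‖p - p'‖ + ‖γ - γ'‖)
  bound_at_zero : ∃ C : ℝ, ∀ t x, |F t x 0 0 0| ≤ C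
  differentiable : ∀ t x r p γ, DifferentiableAt ℝ
    (fun q : ℝ × Vec d × Mat d => F t x q.1 q.2.1 q.2.2) (r, p, γ)
  deriv_eq : ∀ t x r p γ (dq : ℝ × Vec d × Mat d),
    fderiv ℝ (fun q : ℝ × Vec d × Mat d => F t x q.1 q.2.1 q.2.2) (r, p, γ) dq
      = Fr t x r p γ * dq.1 + Fp t x r p γ ⬝ᵥ dq.2.1
        + ∑ i, ∑ j, Fγ t x r p γ i j * dq.2.2 i j
  psd : ∀ t x r p γ, (Fγ t x r p γ).PosSemidef
  trace_le_one : ∀ t x r p γ, ((σ t x * (σ t x)ᵀ)⁻¹ * Fγ t x r p γ).trace ≤ 1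
  lower_bound : ∃ K : ℝ, 0 ≤ K ∧ ∀ t x r p γ (w : Vec d),
    Fp t x r p γ ⬝ᵥ w + w ⬝ᵥ (Fγ t x r p γ).mulVec w ≥ -K

/-! ### Moments of the Gaussian vector and of the weights -/

instance gaussVec_isProbabilityMeasure (d : ℕ) (h : ℝ) : IsProbabilityMeasure (gaussVec d h) := by
  unfold gaussVec; infer_instance

lemma gaussVec_eval (d : ℕ) (h : ℝ) (i : Fin d) :
    MeasurePreserving (fun w : Vec d => w i) (gaussVec d h) (gaussianReal 0 h.toNNReal) :=
  measurePreserving_eval (fun _ : Fin d => gaussianReal 0 h.toNNReal) i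

lemma gaussVec_memLp (d : ℕ) (h : ℝ) (i : Fin d) :
    MemLp (fun w : Vec d => w i) 2 (gaussVec d h) :=
  (memLp_id_gaussianReal (μ := 0) (v := h.toNNReal) 2).comp_measurePreserving (gaussVec_eval d h i)

lemma gaussVec_integrable (d : ℕ) (h : ℝ) (i : Fin d) :
    Integrable (fun w : Vec d => w i) (gaussVec d h) :=
  (gaussVec_memLp d h i).integrable (by norm_num)

lemma gaussVec_integrable_mul (d : ℕ) (h : ℝ) (i j : Fin d) :
    Integrable (fun w : Vec d => w i * w j) (gaussVec d h) :=
  (gaussVec_memLp d h i).integrable_mul (gaussVec_memLp d h j)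

lemma gaussVec_integral (d : ℕ) (h : ℝ) (i : Fin d) :
    ∫ w : Vec d, w i ∂gaussVec d h = 0 := by
  have e := integral_map (μ := gaussVec d h) (φ := fun w : Vec d => w i)
    (gaussVec_eval d h i).measurable.aemeasurable (f := fun y : ℝ => y)
    (by fun_prop)
  rw [← e, (gaussVec_eval d h i).map_eq, integral_id_gaussianReal]

lemma gaussVec_integral_mul (d : ℕ) {h : ℝ} (hh : 0 < h) (i j : Fin d) :
    ∫ w : Vec d, w i * w j ∂gaussVec d h = h * (1 : Mat d) i j := by
  by_cases hij : i = j
  · subst hij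
    have hv := variance_of_integral_eq_zero
      (gaussVec_eval d h i).measurable.aemeasurable (gaussVec_integral d h i)
    have e := variance_map (μ := gaussVec d h) (X := fun y : ℝ => y) (Y := fun w : Vec d => w i)
      (by fun_prop) (gaussVec_eval d h i).measurable.aemeasurable
    rw [(gaussVec_eval d h i).map_eq, variance_fun_id_gaussianReal] at e
    have e' : ((fun y : ℝ => y) ∘ fun w : Vec d => w i) = fun w : Vec d => w i := rfl
    rw [e', hv] at e
    simp only [← sq, Matrix.one_apply_eq, mul_one]
    rw [← e]
    simp [hh.le]
  · have hind : IndepFun (fun w : Vec d => w i) (fun w : Vec d => w j) (gaussVec d h) :=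
      (iIndepFun_pi (μ := fun _ : Fin d => gaussianReal 0 h.toNNReal) (X := fun _ y => y)
        (fun _ => aemeasurable_id)).indepFun hij
    rw [hind.integral_fun_mul_eq_mul_integral
      (gaussVec_eval d h i).measurable.aestronglyMeasurable
      (gaussVec_eval d h j).measurable.aestronglyMeasurable, gaussVec_integral]
    simp [hij]

lemma H1w_apply {d : ℕ} (σ : ℝ → Vec d → Mat d) (h t : ℝ) (x w : Vec d) (i : Fin d) :
    H1w σ h t x w i = (1 / h) * ∑ k, (σ t x)ᵀ⁻¹ i k * w k := by
  simp [H1w, Matrix.mulVec, dotProduct]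

lemma H2w_apply {d : ℕ} (σ : ℝ → Vec d → Mat d) (h t : ℝ) (x w : Vec d) (i j : Fin d) :
    H2w σ h t x w i j = (1 / h ^ 2) * ∑ l, (∑ k, (σ t x)ᵀ⁻¹ i k *
      (w k * w l - h * (1 : Mat d) k l)) * (σ t x)⁻¹ l j := by
  simp [H2w, Matrix.mul_apply, vecMulVec_apply]

section weights

variable {d : ℕ} (σ : ℝ → Vec d → Mat d) (h t : ℝ) (x : Vec d)

lemma H1w_integrable (i : Fin d) : Integrable (fun w => H1w σ h t x w i) (gaussVec d h) := by
  simp only [H1w_apply]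
  exact (integrable_finsetSum _ fun k _ => (gaussVec_integrable d h k).const_mul _).const_mul _

lemma H2w_integrable (i j : Fin d) :
    Integrable (fun w => H2w σ h t x w i j) (gaussVec d h) := by
  simp only [H2w_apply]
  exact (integrable_finsetSum _ fun l _ => (integrable_finsetSum _ fun k _ =>
    ((gaussVec_integrable_mul d h k l).sub (integrable_const _)).const_mul _).mul_const _).const_mul _

lemma H1w_integral (i : Fin d) : ∫ w, H1w σ h t x w i ∂gaussVec d h = 0 := by
  simp only [H1w_apply]
  rw [integral_const_mul,
    integral_finsetSum _ fun k _ => (gaussVec_integrable d h k).const_mul _]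
  simp [integral_const_mul, gaussVec_integral]

lemma H2w_integral (hh : 0 < h) (i j : Fin d) :
    ∫ w, H2w σ h t x w i j ∂gaussVec d h = 0 := by
  simp only [H2w_apply]
  have hc : ∀ k l : Fin d, Integrable
      (fun w : Vec d => w k * w l - h * (1 : Mat d) k l) (gaussVec d h) :=
    fun k l => (gaussVec_integrable_mul d h k l).sub (integrable_const _)
  rw [integral_const_mul, integral_finsetSum _ fun l _ =>
    (integrable_finsetSum _ fun k _ => (hc k l).const_mul _).mul_const _]
  have hz : ∀ k l : Fin d, ∫ w : Vec d, (w k * w l - h * (1 : Mat d) k l) ∂gaussVec d h = 0 := by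
    intro k l
    rw [integral_sub (gaussVec_integrable_mul d h k l) (integrable_const _),
      gaussVec_integral_mul d hh]
    simp
  simp only [integral_mul_const]
  simp_rw [fun l => integral_finsetSum (μ := gaussVec d h) Finset.univ
    fun k (_ : k ∈ Finset.univ) => (hc k l).const_mul ((σ t x)ᵀ⁻¹ i k)]
  simp [integral_const_mul, hz]

/-! ### The linearized weight -/

/-- The random weight `r + p · H₁ + ∑ᵢⱼ Γᵢⱼ H₂ᵢⱼ` by which a test function is multiplied when the
linear form `(r, p, Γ)` is applied to its triple of weighted expectations. -/
def weight (r : ℝ) (p : Vec d) (Γ : Mat d) (w : Vec d) : ℝ :=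
  r + p ⬝ᵥ H1w σ h t x w + ∑ i, ∑ j, Γ i j * H2w σ h t x w i j

lemma weight_integrable (r : ℝ) (p : Vec d) (Γ : Mat d) :
    Integrable (weight σ h t x r p Γ) (gaussVec d h) := by
  unfold weight
  simp only [dotProduct]
  exact ((integrable_const _).add (integrable_finsetSum _ fun i _ =>
    (H1w_integrable σ h t x i).const_mul _)).add (integrable_finsetSum _ fun i _ =>
    integrable_finsetSum _ fun j _ => (H2w_integrable σ h t x i j).const_mul _)

/-- The linear form `(r, p, Γ)` applied to the weighted expectations of `f` is the expectation of
`f` against `weight`. -/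
lemma integral_mul_weight (r : ℝ) (p : Vec d) (Γ : Mat d) {f : Vec d → ℝ} (hf : Measurable f)
    {C : ℝ} (hC : ∀ w, |f w| ≤ C) :
    ∫ w, f w * weight σ h t x r p Γ w ∂gaussVec d h
      = r * (∫ w, f w ∂gaussVec d h)
        + p ⬝ᵥ (fun i => ∫ w, f w * H1w σ h t x w i ∂gaussVec d h)
        + ∑ i, ∑ j, Γ i j * ∫ w, f w * H2w σ h t x w i j ∂gaussVec d h := by
  have hb : ∀ {g : Vec d → ℝ}, Integrable g (gaussVec d h) →
      Integrable (fun w => f w * g w) (gaussVec d h) := fun hg =>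
    hg.bdd_mul hf.aestronglyMeasurable (Filter.Eventually.of_forall hC)
  have hf0 : Integrable f (gaussVec d h) := by
    simpa using hb (integrable_const (1 : ℝ))
  have h1 := fun i => hb (H1w_integrable σ h t x i)
  have h2 := fun i j => hb (H2w_integrable σ h t x i j)
  have e : ∀ w, f w * weight σ h t x r p Γ w = r * f w
      + ∑ i, p i * (f w * H1w σ h t x w i)
      + ∑ i, ∑ j, Γ i j * (f w * H2w σ h t x w i j) := by
    intro w
    simp only [weight, dotProduct, mul_add, Finset.mul_sum]
    simp only [mul_left_comm (f w), mul_comm (f w) r]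
  simp only [e, dotProduct]
  have i1 : Integrable (fun w => ∑ i, p i * (f w * H1w σ h t x w i)) (gaussVec d h) :=
    integrable_finsetSum _ fun i _ => (h1 i).const_mul _
  have i2' : ∀ i, Integrable (fun w => ∑ j, Γ i j * (f w * H2w σ h t x w i j)) (gaussVec d h) :=
    fun i => integrable_finsetSum _ fun j _ => (h2 i j).const_mul _
  have i01 : Integrable (fun w => r * f w + ∑ i, p i * (f w * H1w σ h t x w i)) (gaussVec d h) :=
    (hf0.const_mul r).add i1
  rw [integral_add i01 (integrable_finsetSum _ fun i _ => i2' i),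
    integral_add (hf0.const_mul r) i1, integral_const_mul,
    integral_finsetSum _ fun i _ => (h1 i).const_mul _, integral_finsetSum _ fun i _ => i2' i]
  simp_rw [fun i => integral_finsetSum (μ := gaussVec d h) Finset.univ
    fun j (_ : j ∈ Finset.univ) => (h2 i j).const_mul (Γ i j), integral_const_mul]

lemma integral_weight (hh : 0 < h) (r : ℝ) (p : Vec d) (Γ : Mat d) :
    ∫ w, weight σ h t x r p Γ w ∂gaussVec d h = r := by
  have e := integral_mul_weight σ h t x r p Γ (f := fun _ => 1) measurable_const (C := 1)
    (fun _ => by simp)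
  simpa [H1w_integral, H2w_integral σ h t x hh, dotProduct] using e

/-- Completing the weights: with `v = H₁`, one has `H₂ = v vᵀ - a⁻¹ / h`. -/
lemma H2w_eq (hh : 0 < h) (w : Vec d) :
    H2w σ h t x w = vecMulVec (H1w σ h t x w) (H1w σ h t x w)
      - (1 / h) • (σ t x * (σ t x)ᵀ)⁻¹ := by
  have e1 : (σ t x)ᵀ⁻¹ * vecMulVec w w * (σ t x)⁻¹
      = vecMulVec ((σ t x)ᵀ⁻¹.mulVec w) ((σ t x)ᵀ⁻¹.mulVec w) := by
    rw [Matrix.mul_vecMulVec, Matrix.vecMulVec_mul, ← Matrix.transpose_nonsing_inv,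
      Matrix.mulVec_transpose]
  have hh' := hh.ne'
  rw [H2w, H1w, Matrix.mul_sub, Matrix.sub_mul, e1, Matrix.mul_inv_rev]
  ext i j
  simp [vecMulVec_apply]
  field_simp

/-- Nonnegativity of the one-step kernel, from the trace bound and strict monotonicity. -/
lemma one_add_mul_weight_nonneg (hh : 0 < h) (r : ℝ) (p : Vec d) (Γ : Mat d)
    (htr : ((σ t x * (σ t x)ᵀ)⁻¹ * Γ).trace ≤ 1)
    (hpos : ∀ v : Vec d, r + p ⬝ᵥ v + v ⬝ᵥ Γ.mulVec v ≥ 0) (w : Vec d) :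
    0 ≤ 1 + h * weight σ h t x r p Γ w := by
  set v := H1w σ h t x w with hv
  set B : Mat d := (σ t x * (σ t x)ᵀ)⁻¹ with hB
  have hBs : ∀ i j, B i j = B j i := by
    have : Bᵀ = B := by
      rw [hB, Matrix.transpose_nonsing_inv, Matrix.transpose_mul, Matrix.transpose_transpose]
    intro i j
    exact (congrFun (congrFun this j) i)
  have e : ∑ i, ∑ j, Γ i j * H2w σ h t x w i j
      = v ⬝ᵥ Γ.mulVec v - (1 / h) * (B * Γ).trace := by
    rw [H2w_eq σ h t x hh w, Matrix.trace_mul_comm]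
    simp only [Matrix.trace, Matrix.diag, Matrix.mul_apply, dotProduct, Matrix.mulVec,
      Finset.mul_sum, ← Finset.sum_sub_distrib]
    refine Finset.sum_congr rfl fun i _ => Finset.sum_congr rfl fun j _ => ?_
    simp only [Matrix.sub_apply, vecMulVec_apply, Matrix.smul_apply, smul_eq_mul, ← hv, ← hB,
      hBs i j]
    ring
  have e2 : 1 + h * weight σ h t x r p Γ w
      = (1 - (B * Γ).trace) + h * (r + p ⬝ᵥ v + v ⬝ᵥ Γ.mulVec v) := by
    rw [weight, e]
    field_simp
    ring
  rw [e2]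
  exact add_nonneg (by linarith) (mul_nonneg hh.le (hpos v))

end weights

/-! ### Comparison of one-step operators -/

lemma measurable_euler {d : ℕ} (μ : ℝ → Vec d → Vec d) (σ : ℝ → Vec d → Mat d)
    (h t : ℝ) (x : Vec d) : Measurable (euler μ σ h t x) := by
  have : Continuous (euler μ σ h t x) := by
    unfold euler
    fun_prop
  exact this.measurable

/-- Mean value form of the difference of two one-step operators: it is the expectation of the
difference of the test functions against the kernel `1 + h Q`, with `Q` frozen at some point. -/
lemma exists_step_sub_eq {d : ℕ} (μ : ℝ → Vec d → Vec d) (σ : ℝ → Vec d → Mat d)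
    (G Gr : ℝ → Vec d → ℝ → Vec d → Mat d → ℝ)
    (Gp : ℝ → Vec d → ℝ → Vec d → Mat d → Vec d)
    (Gγ : ℝ → Vec d → ℝ → Vec d → Mat d → Mat d)
    (hG : AssumptionF d σ G Gr Gp Gγ) (h t : ℝ) (x : Vec d)
    {f g : Vec d → ℝ} (hf : Measurable f) (hg : Measurable g) {C D : ℝ}
    (hC : ∀ y, |f y| ≤ C) (hD : ∀ y, |g y| ≤ D) :
    ∃ r p γ, step G μ σ h t f x - step G μ σ h t g x
      = ∫ w, (f (euler μ σ h t x w) - g (euler μ σ h t x w))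
          * (1 + h * weight σ h t x (Gr t x r p γ) (Gp t x r p γ) (Gγ t x r p γ) w)
            ∂gaussVec d h := by
  have hE := measurable_euler μ σ h t x
  have hfE := hf.comp hE
  have hgE := hg.comp hE
  have hbf : ∀ {k : Vec d → ℝ}, Integrable k (gaussVec d h) →
      Integrable (fun w => f (euler μ σ h t x w) * k w) (gaussVec d h) := fun hk =>
    hk.bdd_mul hfE.aestronglyMeasurable (Filter.Eventually.of_forall fun _ => hC _)
  have hbg : ∀ {k : Vec d → ℝ}, Integrable k (gaussVec d h) →
      Integrable (fun w => g (euler μ σ h t x w) * k w) (gaussVec d h) := fun hk =>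
    hk.bdd_mul hgE.aestronglyMeasurable (Filter.Eventually.of_forall fun _ => hD _)
  have hf0 : Integrable (fun w => f (euler μ σ h t x w)) (gaussVec d h) := by
    simpa using hbf (integrable_const (1 : ℝ))
  have hg0 : Integrable (fun w => g (euler μ σ h t x w)) (gaussVec d h) := by
    simpa using hbg (integrable_const (1 : ℝ))
  -- the triple of weighted expectations at which `G` is evaluated
  let q : (Vec d → ℝ) → ℝ × Vec d × Mat d := fun k =>
    (∫ w, k (euler μ σ h t x w) ∂gaussVec d h,
      fun i => ∫ w, k (euler μ σ h t x w) * H1w σ h t x w i ∂gaussVec d h,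
      Matrix.of fun i j => ∫ w, k (euler μ σ h t x w) * H2w σ h t x w i j ∂gaussVec d h)
  obtain ⟨⟨r, p, γ⟩, -, hz⟩ := domain_mvt (s := Set.univ) (x := q g) (y := q f)
    (f := fun q : ℝ × Vec d × Mat d => G t x q.1 q.2.1 q.2.2)
    (f' := fun z => fderiv ℝ (fun q : ℝ × Vec d × Mat d => G t x q.1 q.2.1 q.2.2) z)
    (fun z _ => (hG.differentiable t x z.1 z.2.1 z.2.2).hasFDerivAt.hasFDerivWithinAt)
    convex_univ (mem_univ _) (mem_univ _)
  refine ⟨r, p, γ, ?_⟩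
  replace hz := hz.trans (hG.deriv_eq t x r p γ (q f - q g))
  have hs : step G μ σ h t f x - step G μ σ h t g x = ((q f).1 - (q g).1) + h *
      (G t x (q f).1 (q f).2.1 (q f).2.2 - G t x (q g).1 (q g).2.1 (q g).2.2) := by
    simp only [step, q]; ring
  rw [hs, hz]
  set Q := weight σ h t x (Gr t x r p γ) (Gp t x r p γ) (Gγ t x r p γ) with hQ
  have hQi : Integrable Q (gaussVec d h) := weight_integrable σ h t x _ _ _
  have ef := integral_mul_weight σ h t x (Gr t x r p γ) (Gp t x r p γ) (Gγ t x r p γ) hfE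
    (C := C) (fun _ => hC _)
  have eg := integral_mul_weight σ h t x (Gr t x r p γ) (Gp t x r p γ) (Gγ t x r p γ) hgE
    (C := D) (fun _ => hD _)
  simp only [Function.comp_apply, ← hQ] at ef eg
  have e : ∀ w, (f (euler μ σ h t x w) - g (euler μ σ h t x w)) * (1 + h * Q w)
      = (f (euler μ σ h t x w) - g (euler μ σ h t x w))
        + h * (f (euler μ σ h t x w) * Q w - g (euler μ σ h t x w) * Q w) := fun w => by ring
  simp only [e]
  have hfg : Integrable (fun w => f (euler μ σ h t x w) - g (euler μ σ h t x w)) (gaussVec d h) :=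
    hf0.sub hg0
  have hfgQ : Integrable (fun w => h * (f (euler μ σ h t x w) * Q w
      - g (euler μ σ h t x w) * Q w)) (gaussVec d h) :=
    ((hbf hQi).sub (hbg hQi)).const_mul h
  rw [integral_add hfg hfgQ,
    integral_sub hf0 hg0, integral_const_mul, integral_sub (hbf hQi) (hbg hQi), ef, eg]
  have ed : Gp t x r p γ ⬝ᵥ (q f - q g).2.1
      = Gp t x r p γ ⬝ᵥ (q f).2.1 - Gp t x r p γ ⬝ᵥ (q g).2.1 := by
    rw [← dotProduct_sub]; rfl
  have em : ∑ i, ∑ j, Gγ t x r p γ i j * (q f - q g).2.2 i j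
      = ∑ i, ∑ j, Gγ t x r p γ i j * (q f).2.2 i j
        - ∑ i, ∑ j, Gγ t x r p γ i j * (q g).2.2 i j := by
    simp only [← Finset.sum_sub_distrib, ← mul_sub]; rfl
  rw [ed, em]
  simp only [q, Prod.fst_sub, Matrix.of_apply]
  ring

/-- Strengthened monotonicity (Lemma 3.25 of the paper): for
`δ(t) = e^{β(T−t)}(a₀ + b₀(T−t))` with `β ≥ sup|G_r|`, `a₀, b₀ ≥ 0` and `φ ≤ ψ`,
one has `T_h[φ + δ] ≤ T_h[ψ] + δ(t) − h b₀`. -/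
theorem Th_strengthened_monotonicity
    (d : ℕ) (T : ℝ) (hT : 0 < T)
    (μ : ℝ → Vec d → Vec d) (σ : ℝ → Vec d → Mat d)
    (hμmeas : ∀ i, Measurable fun q : ℝ × Vec d => μ q.1 q.2 i)
    (hσmeas : ∀ i j, Measurable fun q : ℝ × Vec d => σ q.1 q.2 i j)
    (hμbdd : ∃ C : ℝ, ∀ s y, ‖μ s y‖ ≤ C)
    (hσbdd : ∃ C : ℝ, ∀ s y, ‖σ s y‖ ≤ C)
    (hσinv : ∀ s y, IsUnit (σ s y).det)
    (G Gr : ℝ → Vec d → ℝ → Vec d → Mat d → ℝ)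
    (Gp : ℝ → Vec d → ℝ → Vec d → Mat d → Vec d)
    (Gγ : ℝ → Vec d → ℝ → Vec d → Mat d → Mat d)
    (hG : AssumptionF d σ G Gr Gp Gγ)
    (hstrict : ∀ t x r p γ (w : Vec d),
      Gr t x r p γ + Gp t x r p γ ⬝ᵥ w + w ⬝ᵥ (Gγ t x r p γ).mulVec w ≥ 0)
    (β : ℝ) (hβ : ∀ t x r p γ, |Gr t x r p γ| ≤ β)
    (a₀ b₀ : ℝ) (ha₀ : 0 ≤ a₀) (hb₀ : 0 ≤ b₀) :
    ∀ φ ψ : ℝ → Vec d → ℝ,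
      (∃ Cb : ℝ, ∀ t ∈ Icc (0 : ℝ) T, ∀ x, |φ t x| ≤ Cb ∧ |ψ t x| ≤ Cb) →
      Measurable (fun q : ℝ × Vec d => φ q.1 q.2) →
      Measurable (fun q : ℝ × Vec d => ψ q.1 q.2) →
      (∀ t ∈ Icc (0 : ℝ) T, ∀ x, φ t x ≤ ψ t x) →
      ∀ h : ℝ, 0 < h → ∀ t : ℝ, 0 ≤ t → t + h ≤ T → ∀ x : Vec d,
        Th G μ σ
            (fun s y => φ s y + Real.exp (β * (T - s)) * (a₀ + b₀ * (T - s)))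
            h t x
          ≤ Th G μ σ ψ h t x
            + Real.exp (β * (T - t)) * (a₀ + b₀ * (T - t)) - h * b₀ := by
  rintro φ ψ ⟨Cb, hCb⟩ hφ hψ hle h hh t ht htT x
  have hmem : t + h ∈ Icc (0 : ℝ) T := ⟨by linarith, htT⟩
  set δ : ℝ := Real.exp (β * (T - (t + h))) * (a₀ + b₀ * (T - (t + h))) with hδ
  have hδ0 : 0 ≤ δ := mul_nonneg (Real.exp_pos _).le
    (add_nonneg ha₀ (mul_nonneg hb₀ (by linarith)))
  have hφm : Measurable fun y => φ (t + h) y := hφ.comp measurable_prodMk_left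
  have hψm : Measurable fun y => ψ (t + h) y := hψ.comp measurable_prodMk_left
  obtain ⟨r, p, γ, hstep⟩ := exists_step_sub_eq μ σ G Gr Gp Gγ hG h t x
    (f := fun y => φ (t + h) y + δ) (g := ψ (t + h)) (hφm.add_const δ) hψm
    (C := Cb + |δ|) (D := Cb)
    (fun y => (abs_add_le _ _).trans (by gcongr; exact (hCb _ hmem y).1))
    (fun y => (hCb _ hmem y).2)
  have hk := one_add_mul_weight_nonneg σ h t x hh _ _ _
    (hG.trace_le_one t x r p γ) (hstrict t x r p γ)
  have hQi := weight_integrable σ h t x (Gr t x r p γ) (Gp t x r p γ) (Gγ t x r p γ)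
  have hQ1 := integral_weight σ h t x hh (Gr t x r p γ) (Gp t x r p γ) (Gγ t x r p γ)
  set Q := weight σ h t x (Gr t x r p γ) (Gp t x r p γ) (Gγ t x r p γ)
  have hKi : Integrable (fun w => 1 + h * Q w) (gaussVec d h) :=
    (integrable_const _).add (hQi.const_mul h)
  have hE := measurable_euler μ σ h t x
  have hbound : ∫ w, (φ (t + h) (euler μ σ h t x w) + δ - ψ (t + h) (euler μ σ h t x w))
      * (1 + h * Q w) ∂gaussVec d h ≤ ∫ w, δ * (1 + h * Q w) ∂gaussVec d h := by
    refine integral_mono (hKi.bdd_mul (c := Cb + |δ| + Cb) ?_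
      (Filter.Eventually.of_forall fun w => ?_)) (hKi.const_mul δ) fun w => ?_
    · exact (((hφm.comp hE).add_const δ).sub (hψm.comp hE)).aestronglyMeasurable
    · have h1 := (hCb _ hmem (euler μ σ h t x w))
      exact (abs_sub _ _).trans
        (add_le_add ((abs_add_le _ _).trans (by gcongr; exact h1.1)) h1.2)
    · have h1 := hle _ hmem (euler μ σ h t x w)
      exact mul_le_mul_of_nonneg_right (by linarith) (hk w)
  have hI : ∫ w, δ * (1 + h * Q w) ∂gaussVec d h = δ * (1 + h * Gr t x r p γ) := by
    rw [integral_const_mul, integral_add (integrable_const _) (hQi.const_mul h),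
      integral_const_mul, hQ1]
    simp
  have hβ0 : 0 ≤ β := (abs_nonneg _).trans (hβ t x r p γ)
  have hGr : Gr t x r p γ ≤ β := (le_abs_self _).trans (hβ t x r p γ)
  have hexp : 1 + h * Gr t x r p γ ≤ Real.exp (β * h) := by
    have h1 := Real.add_one_le_exp (β * h)
    have h2 := mul_le_mul_of_nonneg_left hGr hh.le
    linarith [mul_comm β h]
  have hδe : δ * Real.exp (β * h)
      = Real.exp (β * (T - t)) * (a₀ + b₀ * (T - t)) - Real.exp (β * (T - t)) * (h * b₀) := by
    have : Real.exp (β * (T - t)) = Real.exp (β * (T - (t + h))) * Real.exp (β * h) := by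
      rw [← Real.exp_add]; congr 1; ring
    rw [this, hδ]; ring
  have h1exp : 1 ≤ Real.exp (β * (T - t)) :=
    Real.one_le_exp (mul_nonneg hβ0 (by linarith))
  have hlast : h * b₀ ≤ Real.exp (β * (T - t)) * (h * b₀) :=
    le_mul_of_one_le_left (mul_nonneg hh.le hb₀) h1exp
  have hmul := mul_le_mul_of_nonneg_left hexp hδ0
  rw [hI] at hbound
  simp only [Th, ← hδ]
  linarith

end
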